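/- arXiv:1503.02487 — 4 statements merged into one kernel-verified Lean document; each statement's English description precedes it below -/
import Mathlib

section
/- Define rational numbers ε_i := (q_i + q̄_i)/d − 1 for 0 ≤ i ≤ n+1 (so ε_0 = ε_{n+1} = 0). Then for every 1 ≤ j ≤ n one has ε_{j−1} + ε_{j+1} − c_j·ε_j = c_j − 2. (This expresses that the discrepancy divisor of the Hirzebruch–Jung resolution of X(d;1,q) is Σ_i ((q_i + q̄_i)/d − 1)·E_i, where the intersection matrix is tridiagonal with diagonal entries −c_i and off-diagonal entries 1.) -/
/-!
The identity is equivalent to the recursion `q̄_{j-1} + q̄_{j+1} = c_j q̄_j`, because the `q_i` satisfy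
the same recursion and the constants `-1` contribute `c_j - 2`. Let `p_i` solve this recursion with
`p_0 = 0`, `p_1 = 1`. Since `c_i ≥ 2`, the `p_i` increase strictly, and the determinant
`p_{i+1} q_i - p_i q_{i+1}` has the constant value `d`, so `p_{n+1} = d`. Both `q p_i` and `q_i` satisfy
the recursion and agree modulo `d` for `i = 0, 1`, hence always. Thus for `1 ≤ i ≤ n` the number `p_i`
lies strictly between `0` and `d` and solves `q p_i ≡ q_i (mod d)`; as `q` is a unit modulo `d`, the
solution in this range is unique, so `q̄_i = p_i`. This also holds at `i = 0` and `i = n + 1`.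
-/

/-- The solution of `p_{i-1} + p_{i+1} = c_i p_i` with `p_0 = 0`, `p_1 = 1`, that is, the numerators of
the continued fraction with entries `c_1, c_2, …`, with index shifted by one. -/
def hjNum (C : ℕ → ℤ) : ℕ → ℤ
  | 0 => 0
  | 1 => 1
  | k + 2 => C (k + 1) * hjNum C (k + 1) - hjNum C k

theorem hjNum_nonneg_lt_succ (C : ℕ → ℤ) (n : ℕ) (hC2 : ∀ i, 1 ≤ i → i ≤ n → 2 ≤ C i) :
    ∀ k, k ≤ n → 0 ≤ hjNum C k ∧ hjNum C k < hjNum C (k + 1) := by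
  intro k
  induction k with
  | zero => intro _; simp [hjNum]
  | succ k ih =>
    intro hk
    obtain ⟨h0, h1⟩ := ih (by omega)
    have h2 := hC2 (k + 1) (by omega) hk
    refine ⟨by omega, ?_⟩
    rw [hjNum]
    nlinarith

theorem hjNum_det (C Q : ℕ → ℤ) (n : ℕ)
    (hC : ∀ i, 1 ≤ i → i ≤ n → Q (i - 1) = C i * Q i - Q (i + 1)) :
    ∀ k, k ≤ n → hjNum C (k + 1) * Q k - hjNum C k * Q (k + 1) = Q 0 := by
  intro k
  induction k with
  | zero => intro _; simp [hjNum]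
  | succ k ih =>
    intro hk
    have h1 := ih (by omega)
    have h2 := hC (k + 1) (by omega) hk
    rw [Nat.add_sub_cancel] at h2
    rw [hjNum, ← h1, h2]
    ring

theorem dvd_mul_hjNum_sub (C Q : ℕ → ℤ) (n : ℕ)
    (hC : ∀ i, 1 ≤ i → i ≤ n → Q (i - 1) = C i * Q i - Q (i + 1)) :
    ∀ k, k ≤ n → Q 0 ∣ Q 1 * hjNum C k - Q k ∧ Q 0 ∣ Q 1 * hjNum C (k + 1) - Q (k + 1) := by
  intro k
  induction k with
  | zero => intro _; simp [hjNum]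
  | succ k ih =>
    intro hk
    obtain ⟨h0, h1⟩ := ih (by omega)
    have h2 := hC (k + 1) (by omega) hk
    rw [Nat.add_sub_cancel] at h2
    refine ⟨h1, ?_⟩
    have h3 := (h1.mul_left (C (k + 1))).sub h0
    have h4 : Q 1 * hjNum C (k + 2) - Q (k + 2) =
        C (k + 1) * (Q 1 * hjNum C (k + 1) - Q (k + 1)) - (Q 1 * hjNum C k - Q k) := by
      rw [hjNum, h2]
      ring
    exact h4 ▸ h3

/-- **Hirzebruch–Jung data** of `d/q` for coprime `d > q ≥ 1`:
`q_0 = d > q_1 = q > ⋯ > q_n = 1 > q_{n+1} = 0`, `c_i ≥ 2` with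
`q_{i-1} = c_i q_i − q_{i+1}`; `q̄_i` is the smallest positive integer with
`q·q̄_i ≡ q_i (mod d)` (and `q̄_0 = 0`, `q̄_{n+1} = d`).

**Statement:** setting `ε_i := (q_i + q̄_i)/d − 1` (so `ε_0 = ε_{n+1} = 0`),
for every `1 ≤ j ≤ n` one has `ε_{j−1} + ε_{j+1} − c_j·ε_j = c_j − 2`.
(The discrepancy divisor of the Hirzebruch–Jung resolution of `X(d;1,q)` is
`Σ ((q_i + q̄_i)/d − 1)·E_i`.) -/
theorem discrepancy_coefficients
    (n : ℕ) (d q : ℤ) (Q C Qbar : ℕ → ℤ)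
    (hn : 1 ≤ n) (hq1 : 1 ≤ q) (hqd : q < d) (hcop : Int.gcd d q = 1)
    (hQ0 : Q 0 = d) (hQ1 : Q 1 = q) (hQn : Q n = 1) (hQtop : Q (n + 1) = 0)
    (hQdec : ∀ i, i ≤ n → Q (i + 1) < Q i)
    (hC : ∀ i, 1 ≤ i → i ≤ n → Q (i - 1) = C i * Q i - Q (i + 1))
    (hC2 : ∀ i, 1 ≤ i → i ≤ n → 2 ≤ C i)
    (hQbar0 : Qbar 0 = 0) (hQbarTop : Qbar (n + 1) = d)
    (hQbarPos : ∀ i, 1 ≤ i → i ≤ n → 0 < Qbar i)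
    (hQbarCong : ∀ i, 1 ≤ i → i ≤ n → d ∣ q * Qbar i - Q i)
    (hQbarMin : ∀ i, 1 ≤ i → i ≤ n → ∀ t : ℤ, 0 < t → d ∣ q * t - Q i → Qbar i ≤ t) :
    ∀ j, 1 ≤ j → j ≤ n →
      ((((Q (j - 1) : ℚ) + (Qbar (j - 1) : ℚ)) / (d : ℚ) - 1)
        + (((Q (j + 1) : ℚ) + (Qbar (j + 1) : ℚ)) / (d : ℚ) - 1))
        - (C j : ℚ) * (((Q j : ℚ) + (Qbar j : ℚ)) / (d : ℚ) - 1)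
      = (C j : ℚ) - 2 := by
  have hmono := hjNum_nonneg_lt_succ C n hC2
  have htop : hjNum C (n + 1) = d := by
    have h := hjNum_det C Q n hC n le_rfl
    simpa [hQn, hQtop, hQ0] using h
  have hlt : ∀ m k, k + m = n → hjNum C k < d := by
    intro m
    induction m with
    | zero =>
      intro k hk
      have h := (hmono k (by omega)).2
      rwa [show k = n by omega, htop, ← show k = n by omega] at h
    | succ m ih =>
      intro k hk
      exact (hmono k (by omega)).2.trans (ih (k + 1) (by omega))
  have hEq : ∀ k, k ≤ n + 1 → Qbar k = hjNum C k := by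
    intro k hk
    rcases Nat.eq_zero_or_pos k with rfl | hk1
    · simp [hQbar0, hjNum]
    rcases Nat.lt_or_ge n k with hkn | hkn
    · rw [show k = n + 1 by omega, htop, hQbarTop]
    have hpos : 0 < hjNum C k := by
      obtain ⟨h0, h1⟩ := hmono (k - 1) (by omega)
      rw [Nat.sub_add_cancel hk1] at h1
      omega
    have hdvd := (dvd_mul_hjNum_sub C Q n hC k hkn).1
    rw [hQ0, hQ1] at hdvd
    have hle := hQbarMin k hk1 hkn _ hpos hdvd
    have hb := hQbarPos k hk1 hkn
    have hl := hlt (n - k) k (by omega)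
    have hd : d ∣ q * (hjNum C k - Qbar k) := by
      have h := hdvd.sub (hQbarCong k hk1 hkn)
      rwa [sub_sub_sub_cancel_right, ← mul_sub] at h
    have hd' : d ∣ hjNum C k - Qbar k :=
      (Int.isCoprime_iff_gcd_eq_one.mpr hcop).dvd_of_dvd_mul_left hd
    have := Int.eq_zero_of_dvd_of_nonneg_of_lt (by omega) (by omega) hd'
    omega
  intro j hj1 hjn
  obtain ⟨i, rfl⟩ : ∃ i, j = i + 1 := ⟨j - 1, by omega⟩
  have hQrec := hC (i + 1) hj1 hjn
  have hrec : Qbar (i + 1 + 1) = C (i + 1) * Qbar (i + 1) - Qbar i := by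
    rw [hEq _ (by omega), hEq _ (by omega), hEq _ (by omega), hjNum]
  rw [Nat.add_sub_cancel] at hQrec ⊢
  have hd0 : (d : ℚ) ≠ 0 := by
    have : d ≠ 0 := by omega
    exact_mod_cast this
  rw [hrec, hQrec]
  push_cast
  field_simp
  ring
end

section
/- Let 0 < k < d with greedy X-decomposition (k_1, …, k_n) and set ‖k‖₁ := Σ_i k_i. Let w := d − 1 − q and let k' be the residue of k + w modulo d. Then the set difference 𝕃(k') \ (𝕃(k) ⊕ 𝕃(w)) — where ⊕ denotes the Minkowski sum of subsets of ℤ≥0² — is finite and has exactly ‖k‖₁ − 1 elements. (This is the combinatorial core of the structure theorem 𝓜^nul_f = 𝒪_X(k) ⊗ 𝒪_X(w) for the LR-logarithmic eigenmodule of a generic germ f of degree k: it says dim_ℂ 𝒪_X(k+w)/(𝒪_X(k)⊗𝒪_X(w)) = ‖k‖₁ − 1.) -/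
/-!
Translating by `(1, 1)` turns `𝕃(w)`, `w = d - 1 - q`, into the set of points of `𝕃(0)` with both
coordinates positive. Hence `𝕃(k') \ (𝕃(k) ⊕ 𝕃(w))` corresponds to the set of `(a, b)` with
`a, b ≥ 1` and `a + q b ≡ k (mod d)` such that the box `[1, a] × [1, b]` contains no point of
`𝕃(0)`. Allowing also `b = 0` (with `a < d`) adds exactly the point `(k, 0)`; the resulting set is
`goodSet`, and it has to be shown that it has `‖k‖₁` elements.

Let `p_0 = 0`, `p_1 = 1`, `p_{i+1} = c_i p_i - p_{i-1}`. Then `q_i ≡ q p_i (mod d)`, and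
`q_i p_{i+1} - q_{i+1} p_i = d` shows that the `q_i` are the successive minima of `q y mod d`:
if `1 ≤ y < p_{i+1}` and `0 ≤ x ≡ q y`, then `x ≥ q_i` (`record_min`). Consequently, from a good
point `(a, b)` with `q_i ≤ a < q_{i-1}`, the good point with next larger `b` is
`(a - q_i, b + p_i)`, unless `a = q_i`, in which case there is none (`goodFrom_step`,
`Valid.step`, `goodFrom_zero`). So the good points are met one at a time by running the greedy
algorithm from `(k, 0)`, one for each coin used.
-/

open Pointwise

/-- The remainders of the greedy change-making algorithm for the coin system
`Q 0, Q 1, …`: `r_0 = k % Q 0` and `r_{i+1} = r_i % Q (i+1)`. -/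
def hjRem (Q : ℕ → ℤ) (k : ℤ) : ℕ → ℤ
  | 0 => k % Q 0
  | i + 1 => hjRem Q k i % Q (i + 1)

/-- The greedy digits for the coin system `Q 0, Q 1, …`:
`g_0 = ⌊k / Q 0⌋` and `g_{i+1} = ⌊r_i / Q (i+1)⌋`.  For `0 ≤ k < d = Q 0`
the digits at indices `1, …, n` form the greedy `X`-decomposition of `k`. -/
def hjGreedy (Q : ℕ → ℤ) (k : ℤ) : ℕ → ℤ
  | 0 => k / Q 0
  | i + 1 => hjRem Q k i / Q (i + 1)

/-- The affine lattice `𝕃(m) = {(r,s) ∈ ℤ≥0² : r + q·s ≡ m (mod d)}`. -/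
def latt (d q m : ℤ) : Set (ℤ × ℤ) :=
  {rs : ℤ × ℤ | 0 ≤ rs.1 ∧ 0 ≤ rs.2 ∧ d ∣ rs.1 + q * rs.2 - m}

/-- The numbers `p_0 = 0`, `p_1 = 1`, `p_{i+1} = c_i p_i - p_{i-1}`, which satisfy
`q_i ≡ q p_i (mod d)`. -/
def hjP (C : ℕ → ℤ) : ℕ → ℤ
  | 0 => 0
  | 1 => 1
  | i + 2 => C (i + 1) * hjP C (i + 1) - hjP C i

/-- The box `[1, a] × [1, b]` contains no point of `𝕃(0)`. -/
def EmptyBox (d q a b : ℤ) : Prop :=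
  ∀ u v : ℤ, 1 ≤ u → u ≤ a → 1 ≤ v → v ≤ b → ¬ d ∣ u + q * v

/-- The points `(a, b)` of class `k` with `1 ≤ a < d` and `b ≥ b₀` whose box `[1, a] × [1, b]`
avoids `𝕃(0)`. -/
def goodFrom (d q k b₀ : ℤ) : Set (ℤ × ℤ) :=
  {ab | 1 ≤ ab.1 ∧ ab.1 < d ∧ b₀ ≤ ab.2 ∧ d ∣ ab.1 + q * ab.2 - k ∧ EmptyBox d q ab.1 ab.2}

/-- The full set of good points. -/
abbrev goodSet (d q k : ℤ) : Set (ℤ × ℤ) := goodFrom d q k 0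

/-- The states of the greedy algorithm: `a` is the current remainder, and `b` the sum of the `p_i`
over the coins `q_i` used so far. Unlike for good points, `a = 0` is allowed. -/
structure Valid (d q k a b : ℤ) : Prop where
  nonneg : 0 ≤ a
  lt : a < d
  nonneg' : 0 ≤ b
  cls : d ∣ a + q * b - k
  box : EmptyBox d q a b

lemma dvd_of_dvd_of_eq {d x y : ℤ} (h : d ∣ x) (e : y = x) : d ∣ y := e ▸ h

/-- `(x, y)` is an integral combination of `(Q₀, P₀)` and `(Q₁, P₁)`, by the determinant condition;
the signs of the two coefficients then force the bound. -/
lemma record_min {d q Q₀ Q₁ P₀ P₁ : ℤ} (hd : 0 < d) (hQ : Q₁ < Q₀) (hQ1 : 0 < Q₁)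
    (hP0 : 0 ≤ P₀) (hP : P₀ < P₁) (hdet : Q₀ * P₁ - Q₁ * P₀ = d)
    (h0 : d ∣ Q₀ - q * P₀) (h1 : d ∣ Q₁ - q * P₁)
    {x y : ℤ} (hx : 0 ≤ x) (hy : 1 ≤ y) (hyP : y < P₁) (hxy : d ∣ x - q * y) : Q₀ ≤ x := by
  obtain ⟨e₀, he₀⟩ := h0
  obtain ⟨e₁, he₁⟩ := h1
  obtain ⟨e, he⟩ := hxy
  obtain ⟨α, hα⟩ : ∃ α, x * P₁ - y * Q₁ = d * α :=
    ⟨e * P₁ - y * e₁, by linear_combination P₁ * he - y * he₁⟩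
  obtain ⟨β, hβ⟩ : ∃ β, Q₀ * y - P₀ * x = d * β :=
    ⟨y * e₀ - P₀ * e, by linear_combination y * he₀ - P₀ * he⟩
  have ex : x = α * Q₀ + β * Q₁ := by
    apply mul_left_cancel₀ hd.ne'
    linear_combination Q₀ * hα + Q₁ * hβ - x * hdet
  have ey : y = α * P₀ + β * P₁ := by
    apply mul_left_cancel₀ hd.ne'
    linear_combination P₀ * hα + P₁ * hβ - y * hdet
  by_contra! hlt
  rcases le_or_gt α 0 with ha | ha
  · have hb : 1 ≤ β := by
      by_contra! hb
      nlinarith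
    have hba : 1 ≤ α + β := by
      by_contra! hb'
      have hβα : β ≤ -α := by omega
      have : α ≤ -1 := by omega
      nlinarith
    nlinarith
  · have hb : β ≤ -1 := by
      by_contra! hb
      nlinarith
    have hba : 1 ≤ α + β := by
      by_contra! hb'
      have : α ≤ -β := by omega
      nlinarith
    nlinarith

lemma hj_facts {n : ℕ} {d q : ℤ} {Q C : ℕ → ℤ} (hQ0 : Q 0 = d) (hQ1 : Q 1 = q)
    (hC : ∀ i, 1 ≤ i → i ≤ n → Q (i - 1) = C i * Q i - Q (i + 1))
    (hC2 : ∀ i, 1 ≤ i → i ≤ n → 2 ≤ C i) (i : ℕ) (hi : i ≤ n) :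
    0 ≤ hjP C i ∧ hjP C i < hjP C (i + 1) ∧ Q i * hjP C (i + 1) - Q (i + 1) * hjP C i = d ∧
      d ∣ Q i - q * hjP C i ∧ d ∣ Q (i + 1) - q * hjP C (i + 1) := by
  induction i with
  | zero => simp [hjP, hQ0, hQ1]
  | succ i ih =>
    obtain ⟨h1, h2, h3, h4, h5⟩ := ih (by omega)
    have hc := hC (i + 1) (by omega) hi
    have hc2 := hC2 (i + 1) (by omega) hi
    simp only [Nat.add_sub_cancel] at hc
    have hp : hjP C (i + 1 + 1) = C (i + 1) * hjP C (i + 1) - hjP C i := rfl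
    have hq : Q (i + 1 + 1) = C (i + 1) * Q (i + 1) - Q i := by linarith
    refine ⟨by omega, ?_, ?_, h5, ?_⟩
    · rw [hp]; nlinarith
    · rw [hp, hq]; linear_combination h3
    · rw [hp, hq]
      have := dvd_sub (h5.mul_left (C (i + 1))) h4
      exact dvd_of_dvd_of_eq this (by ring)

lemma Q_pos {n : ℕ} {Q : ℕ → ℤ} (hQtop : Q (n + 1) = 0)
    (hQdec : ∀ i, i ≤ n → Q (i + 1) < Q i) (j : ℕ) (hj : j ≤ n) : 0 < Q (n - j) := by
  induction j with
  | zero => have := hQdec n le_rfl; simp only [Nat.sub_zero]; omega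
  | succ j ih =>
    have h := hQdec (n - (j + 1)) (by omega)
    rw [show n - (j + 1) + 1 = n - j by omega] at h
    have := ih (by omega)
    omega

lemma eq_of_dvd_sub {d x a : ℤ} (h : d ∣ x - a) (hx : 0 ≤ x) (hxd : x < d) (ha : 0 ≤ a)
    (had : a < d) : x = a := by
  have := Int.eq_zero_of_abs_lt_dvd h (by rw [abs_lt]; constructor <;> omega)
  omega

lemma goodFrom_zero {d q k b : ℤ} (h : Valid d q k 0 b) : goodFrom d q k b = ∅ := by
  rw [Set.eq_empty_iff_forall_notMem]
  rintro ⟨x, y⟩ ⟨h1, h2, h3, h4, h5⟩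
  simp only at h1 h2 h3 h4 h5
  have hb := h.nonneg'
  have hdv : d ∣ x + q * (y - b) := by
    exact dvd_of_dvd_of_eq (dvd_sub h4 h.cls) (by ring)
  rcases h3.eq_or_lt with rfl | hlt
  · have := Int.le_of_dvd (by omega) hdv
    simp at this
    omega
  · exact h5 x (y - b) h1 le_rfl (by omega) (by omega) hdv

/-- `Q₀`, `Q₁`, `P` stand for `q_{i-1}`, `q_i`, `p_i`; `hrec` is the conclusion of `record_min`. -/
lemma Valid.step {d q k a b Q₀ Q₁ P : ℤ} (h : Valid d q k a b)
    (hQ1 : 0 < Q₁) (hP : 0 < P) (hcl : d ∣ Q₁ - q * P)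
    (hrec : ∀ x y : ℤ, 0 ≤ x → 1 ≤ y → y < P → d ∣ x - q * y → Q₀ ≤ x)
    (h1 : Q₁ ≤ a) (h0 : a < Q₀) : Valid d q k (a - Q₁) (b + P) := by
  have hb := h.nonneg'
  have ha := h.lt
  refine ⟨by omega, by omega, by omega, ?_, ?_⟩
  · exact dvd_of_dvd_of_eq (dvd_sub h.cls hcl) (by ring)
  · intro u v hu hua hv hvb hdv
    have hdv' : d ∣ (u + Q₁) + q * (v - P) := by
      exact dvd_of_dvd_of_eq (dvd_add hdv hcl) (by ring)
    rcases lt_trichotomy v P with hlt | heq | hgt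
    · have := hrec (u + Q₁) (P - v) (by omega) (by omega) (by omega)
        (by exact dvd_of_dvd_of_eq (hdv') (by ring))
      omega
    · subst heq
      have := Int.le_of_dvd (by simp; omega) hdv'
      simp at this
      omega
    · exact h.box (u + Q₁) (v - P) (by omega) (by omega) (by omega) (by omega) hdv'

lemma goodFrom_step {d q k a b Q₀ Q₁ P : ℤ} (h : Valid d q k a b)
    (hQ1 : 0 < Q₁) (hP : 0 < P)
    (hrec : ∀ x y : ℤ, 0 ≤ x → 1 ≤ y → y < P → d ∣ x - q * y → Q₀ ≤ x)
    (h1 : Q₁ ≤ a) (h0 : a < Q₀) :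
    goodFrom d q k b = insert (a, b) (goodFrom d q k (b + P)) := by
  have hb := h.nonneg'
  have ha := h.lt
  ext ⟨x, y⟩
  simp only [Set.mem_insert_iff, Prod.mk.injEq]
  constructor
  · rintro ⟨g1, g2, g3, g4, g5⟩
    simp only at g1 g2 g3 g4 g5
    have hdv : d ∣ (x - a) + q * (y - b) := by
      exact dvd_of_dvd_of_eq (dvd_sub g4 h.cls) (by ring)
    rcases lt_or_ge y (b + P) with hlt | hge
    · rcases g3.eq_or_lt with rfl | hby
      · exact Or.inl ⟨eq_of_dvd_sub (by simpa using hdv) (by omega) g2 h.nonneg ha, rfl⟩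
      · exfalso
        rcases lt_or_ge a x with hax | hxa
        · exact g5 (x - a) (y - b) (by omega) (by linarith [h.nonneg]) (by omega) (by omega) hdv
        · have := hrec (a - x) (y - b) (by omega) (by omega) (by omega)
            (by exact dvd_of_dvd_of_eq ((dvd_neg.mpr hdv)) (by ring))
          omega
    · exact Or.inr ⟨g1, g2, hge, g4, g5⟩
  · rintro (⟨rfl, rfl⟩ | ⟨g1, g2, g3, g4, g5⟩)
    · exact ⟨by simp only; omega, ha, le_rfl, h.cls, h.box⟩
    · exact ⟨g1, g2, by simp only at g3 ⊢; omega, g4, g5⟩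

/-- Using the same coin `Q₁` `t` times in a row. -/
lemma coin_steps {d q k a b Q₀ Q₁ P : ℤ} (h : Valid d q k a b)
    (hQ1 : 0 < Q₁) (hP : 0 < P) (hcl : d ∣ Q₁ - q * P)
    (hrec : ∀ x y : ℤ, 0 ≤ x → 1 ≤ y → y < P → d ∣ x - q * y → Q₀ ≤ x)
    (h0 : a < Q₀) (t : ℕ) (ht : t * Q₁ ≤ a) :
    Valid d q k (a - t * Q₁) (b + t * P) ∧
      (goodFrom d q k b).encard = t + (goodFrom d q k (b + t * P)).encard := by
  induction t with
  | zero => simpa using h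
  | succ t ih =>
    push_cast at ht
    obtain ⟨hv, hc⟩ := ih (by linarith)
    have e1 : a - ((t + 1 : ℕ) : ℤ) * Q₁ = a - t * Q₁ - Q₁ := by push_cast; ring
    have e2 : b + ((t + 1 : ℕ) : ℤ) * P = b + t * P + P := by push_cast; ring
    have hle : Q₁ ≤ a - t * Q₁ := by linarith
    have hlt : a - t * Q₁ < Q₀ := by
      have : 0 ≤ (t : ℤ) * Q₁ := by positivity
      linarith
    rw [e1, e2]
    refine ⟨hv.step hQ1 hP hcl hrec hle hlt, ?_⟩
    rw [hc, goodFrom_step hv hQ1 hP hrec hle hlt, Set.encard_insert_of_notMem]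
    · push_cast; ring
    · rintro ⟨-, -, g3, -, -⟩
      simp only at g3
      omega

lemma goodSet_encard
    (n : ℕ) (d q : ℤ) (Q C : ℕ → ℤ)
    (hq1 : 1 ≤ q) (hqd : q < d)
    (hQ0 : Q 0 = d) (hQ1 : Q 1 = q) (hQn : Q n = 1) (hQtop : Q (n + 1) = 0)
    (hQdec : ∀ i, i ≤ n → Q (i + 1) < Q i)
    (hC : ∀ i, 1 ≤ i → i ≤ n → Q (i - 1) = C i * Q i - Q (i + 1))
    (hC2 : ∀ i, 1 ≤ i → i ≤ n → 2 ≤ C i)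
    (k : ℤ) (hk0 : 0 < k) (hkd : k < d) :
    ∃ N : ℕ, (N : ℤ) = ∑ i ∈ Finset.Icc 1 n, hjGreedy Q k i ∧ (goodSet d q k).encard = N := by
  have hd : 0 < d := by omega
  have hpos : ∀ i, i ≤ n → 0 < Q i := fun i hi => by
    have := Q_pos hQtop hQdec (n - i) (by omega)
    rwa [show n - (n - i) = i by omega] at this
  have main : ∀ i, i ≤ n → ∃ (N : ℕ) (b : ℤ), (N : ℤ) = ∑ j ∈ Finset.Icc 1 i, hjGreedy Q k j ∧
      Valid d q k (hjRem Q k i) b ∧ hjRem Q k i < Q i ∧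
      (goodSet d q k).encard = N + (goodFrom d q k b).encard := by
    intro i
    induction i with
    | zero =>
      intro _
      have hr : hjRem Q k 0 = k := by
        simp only [hjRem, hQ0]; exact Int.emod_eq_of_lt hk0.le hkd
      rw [hr, hQ0]
      refine ⟨0, 0, by simp, ⟨hk0.le, hkd, le_rfl, by simp, ?_⟩, hkd, by simp⟩
      intro u v _ _ h1 h2
      omega
    | succ i ih =>
      intro hi
      obtain ⟨N, b, hN, hv, hlt, hc⟩ := ih (by omega)
      obtain ⟨p1, p2, p3, p4, p5⟩ := hj_facts hQ0 hQ1 hC hC2 i (by omega)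
      have hQp := hpos (i + 1) hi
      have hg0 : 0 ≤ hjGreedy Q k (i + 1) := Int.ediv_nonneg hv.nonneg hQp.le
      obtain ⟨t, ht⟩ := Int.eq_ofNat_of_zero_le hg0
      have hrem : hjRem Q k (i + 1) = hjRem Q k i - t * Q (i + 1) := by
        have h1 := Int.emod_add_mul_ediv (hjRem Q k i) (Q (i + 1))
        have h2 : hjRem Q k i / Q (i + 1) = t := ht
        rw [h2] at h1
        change hjRem Q k i % Q (i + 1) = _
        linarith
      have hrem0 : 0 ≤ hjRem Q k (i + 1) := Int.emod_nonneg _ hQp.ne'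
      obtain ⟨hv', hc'⟩ := coin_steps (P := hjP C (i + 1)) hv hQp (by omega) p5
        (fun x y hx hy hyP hxy => record_min hd (hQdec i (by omega)) hQp p1 p2 p3 p4 p5 hx hy hyP
          hxy) hlt t (by linarith)
      refine ⟨N + t, _, ?_, hrem ▸ hv', Int.emod_lt_of_pos _ hQp, ?_⟩
      · rw [Finset.sum_Icc_succ_top (by omega), ← hN, ht]
        push_cast; rfl
      · rw [hc, hc']
        push_cast; ring
  obtain ⟨N, b, hN, hv, hlt, hc⟩ := main n le_rfl
  have hr : hjRem Q k n = 0 := by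
    have := hv.nonneg
    omega
  rw [hr] at hv
  exact ⟨N, hN, by rw [hc, goodFrom_zero hv]; simp⟩

lemma goodSet_eq_insert {d q k : ℤ} (hq1 : 1 ≤ q) (hqd : q < d) (hk0 : 0 < k) (hkd : k < d) :
    goodSet d q k = insert (k, 0) ((fun p : ℤ × ℤ => (p.1 + 1, p.2 + 1)) ''
      (latt d q ((k + (d - 1 - q)) % d) \ (latt d q k + latt d q (d - 1 - q)))) := by
  have hmod : ∀ z : ℤ, d ∣ z - (k + (d - 1 - q)) % d ↔ d ∣ z + 1 + q - k := by
    intro z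
    have h1 : d ∣ (k + (d - 1 - q)) - (k + (d - 1 - q)) % d := Int.dvd_self_sub_emod
    have h2 : z - (k + (d - 1 - q)) % d =
        (z + 1 + q - k) + (((k + (d - 1 - q)) - (k + (d - 1 - q)) % d) - d) := by ring
    rw [h2]
    exact dvd_add_left (dvd_sub h1 dvd_rfl)
  ext ⟨x, y⟩
  simp only [Set.mem_insert_iff, Set.mem_image, Prod.mk.injEq, Prod.exists, Set.mem_sdiff]
  constructor
  · rintro ⟨g1, g2, g3, g4, g5⟩
    simp only at g1 g2 g3 g4 g5
    rcases g3.eq_or_lt with rfl | hy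
    · exact Or.inl ⟨eq_of_dvd_sub (by simpa using g4) (by omega) g2 hk0.le hkd, rfl⟩
    · refine Or.inr ⟨x - 1, y - 1, ⟨⟨by simp only; omega, by simp only; omega, ?_⟩, ?_⟩,
        by ring, by ring⟩
      · rw [hmod]
        exact dvd_of_dvd_of_eq (g4) (by ring)
      · rw [Set.mem_add]
        rintro ⟨⟨r, s⟩, ⟨r0, s0, hrs⟩, ⟨u, v⟩, ⟨u0, v0, huv⟩, hsum⟩
        simp only [Prod.mk_add_mk, Prod.mk.injEq] at r0 s0 hrs u0 v0 huv hsum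
        refine g5 (u + 1) (v + 1) (by omega) (by omega) (by omega) (by omega) ?_
        exact dvd_of_dvd_of_eq (dvd_add huv (dvd_refl d)) (by ring)
  · rintro (⟨rfl, rfl⟩ | ⟨x', y', ⟨⟨x0, y0, hc⟩, hn⟩, rfl, rfl⟩)
    · exact ⟨hk0, hkd, le_rfl, by simp, fun u v _ _ h1 h2 => by simp only at h2; omega⟩
    · simp only at x0 y0 hc
      rw [hmod] at hc
      have hbox : EmptyBox d q (x' + 1) (y' + 1) := by
        intro u v u1 ux v1 vy huv
        apply hn
        rw [Set.mem_add]
        refine ⟨(x' + 1 - u, y' + 1 - v), ⟨by simp only; omega, by simp only; omega, ?_⟩,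
          (u - 1, v - 1), ⟨by simp only; omega, by simp only; omega, ?_⟩, ?_⟩
        · exact dvd_of_dvd_of_eq (dvd_sub hc huv) (by ring)
        · exact dvd_of_dvd_of_eq (dvd_sub huv (dvd_refl d)) (by ring)
        · simp
      refine ⟨by simp only; omega, ?_, by simp only; omega, ?_, hbox⟩
      -- The point `(d - q, 1)` of `𝕃(0)` lies outside the box, which bounds its width.
      · by_contra! hge
        simp only at hge
        exact hbox (d - q) 1 (by omega) (by omega) le_rfl (by omega) (by simp)
      · exact dvd_of_dvd_of_eq (hc) (by ring)


/-- **Hirzebruch–Jung data** of `d/q` for coprime `d > q ≥ 1`: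
`q_0 = d > q_1 = q > ⋯ > q_n = 1 > q_{n+1} = 0`, `c_i ≥ 2` with
`q_{i-1} = c_i q_i − q_{i+1}`.

**Statement:** let `0 < k < d` have greedy `X`-decomposition `(k_1, …, k_n)`
and `‖k‖₁ = Σ k_i`, let `w := d − 1 − q` and `k'` the residue of `k + w`
mod `d`.  Then `𝕃(k') \ (𝕃(k) ⊕ 𝕃(w))` (Minkowski sum) is finite with exactly
`‖k‖₁ − 1` elements.  (Combinatorial core of
`𝓜^nul_f = 𝒪_X(k) ⊗ 𝒪_X(w)` for a generic germ `f` of degree `k`: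
`dim_ℂ 𝒪_X(k+w)/(𝒪_X(k)⊗𝒪_X(w)) = ‖k‖₁ − 1`.) -/
theorem LR_logarithmic_codimension
    (n : ℕ) (d q : ℤ) (Q C : ℕ → ℤ)
    (hn : 1 ≤ n) (hq1 : 1 ≤ q) (hqd : q < d) (hcop : Int.gcd d q = 1)
    (hQ0 : Q 0 = d) (hQ1 : Q 1 = q) (hQn : Q n = 1) (hQtop : Q (n + 1) = 0)
    (hQdec : ∀ i, i ≤ n → Q (i + 1) < Q i)
    (hC : ∀ i, 1 ≤ i → i ≤ n → Q (i - 1) = C i * Q i - Q (i + 1))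
    (hC2 : ∀ i, 1 ≤ i → i ≤ n → 2 ≤ C i)
    (k : ℤ) (hk0 : 0 < k) (hkd : k < d) :
    (latt d q ((k + (d - 1 - q)) % d) \
        (latt d q k + latt d q (d - 1 - q))).Finite ∧
    ((latt d q ((k + (d - 1 - q)) % d) \
        (latt d q k + latt d q (d - 1 - q))).ncard : ℤ)
      = (∑ i ∈ Finset.Icc 1 n, hjGreedy Q k i) - 1 := by
  obtain ⟨N, hN, hcard⟩ :=
    goodSet_encard n d q Q C hq1 hqd hQ0 hQ1 hQn hQtop hQdec hC hC2 k hk0 hkd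
  rw [goodSet_eq_insert hq1 hqd hk0 hkd, Set.encard_insert_of_notMem,
    Function.Injective.encard_image] at hcard
  · generalize latt d q ((k + (d - 1 - q)) % d) \ (latt d q k + latt d q (d - 1 - q)) = S at *
    have hfin : S.Finite := by
      rw [← Set.encard_ne_top_iff]
      intro h
      rw [h] at hcard
      simp at hcard
    refine ⟨hfin, ?_⟩
    rw [← hfin.cast_ncard_eq] at hcard
    have : S.ncard + 1 = N := by exact_mod_cast hcard
    omega
  · rintro ⟨a, b⟩ ⟨a', b'⟩ h
    simpa using h
  · rintro ⟨⟨x, y⟩, ⟨⟨_, hy, _⟩, _⟩, h⟩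
    simp only [Prod.mk.injEq] at h hy
    omega
end

section
/- Fix 1 ≤ i ≤ n and an integer t ≥ 1 with t·q_i < d, and assume that the greedy X-decomposition of t·q_i is concentrated at position i (digit t at position i, digit 0 elsewhere). Then every (r,s) ∈ ℤ≥0² with r + q·s ≡ t·q_i (mod d) satisfies q̄_i·r + q_i·s ≥ t·q_i·q̄_i. (Equivalently: there are no lattice points of 𝕃(t·q_i) strictly below the compact face of the Minkowski sum of t copies of the Newton polygon of x^{q_i} − y^{q̄_i}; for t = 1 this says the Newton polygon of the curvette x^{q_i} − y^{q̄_i} ∈ 𝒪_X(q_i) has a single compact face, joining (q_i,0) and (0,q̄_i).) -/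
/-- The numerators `p_j` of the Hirzebruch–Jung continued fraction with entries `C 1, C 2, …`:
`p_0 = 0`, `p_1 = 1`, `p_{j+2} = C (j+1) p_{j+1} - p_j`. -/
def hjDual (C : ℕ → ℤ) : ℕ → ℤ
  | 0 => 0
  | 1 => 1
  | j + 2 => C (j + 1) * hjDual C (j + 1) - hjDual C j

/-- The properties of `p_j` that are propagated together by induction on `j`. -/
theorem hjDual_props (n : ℕ) (d q : ℤ) (Q C : ℕ → ℤ)
    (hq1 : 1 ≤ q) (hqd : q < d) (hQ0 : Q 0 = d) (hQ1 : Q 1 = q)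
    (hQdec : ∀ i, i ≤ n → Q (i + 1) < Q i) (hpos : ∀ i, i ≤ n → 0 < Q i)
    (hC : ∀ i, 1 ≤ i → i ≤ n → Q (i - 1) = C i * Q i - Q (i + 1))
    (hC2 : ∀ i, 1 ≤ i → i ≤ n → 2 ≤ C i) (j : ℕ) (hj : j ≤ n) :
    0 ≤ hjDual C j ∧ hjDual C j < hjDual C (j + 1) ∧ hjDual C j < d ∧
      Q j * hjDual C (j + 1) - Q (j + 1) * hjDual C j = d ∧
      d ∣ q * hjDual C j - Q j ∧ d ∣ q * hjDual C (j + 1) - Q (j + 1) := by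
  induction j with
  | zero =>
    simp only [hjDual, hQ0, hQ1, zero_add]
    refine ⟨le_refl _, by norm_num, by linarith, by ring, by simp, by simp⟩
  | succ j ih =>
    obtain ⟨h0, h1, h2, h3, h4, h5⟩ := ih (by omega)
    have hc := hC (j + 1) (by omega) hj
    have hc2 := hC2 (j + 1) (by omega) hj
    have hdec := hQdec j (by omega)
    have hp := hpos (j + 1) hj
    have hp' := hpos j (by omega)
    rw [Nat.add_sub_cancel] at hc
    simp only [hjDual]
    refine ⟨by linarith, by nlinarith, ?_, ?_, h5, ?_⟩
    · by_contra hcon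
      push Not at hcon
      nlinarith
    · rw [← h3, hc]; ring
    · have : q * (C (j + 1) * hjDual C (j + 1) - hjDual C j) - Q (j + 1 + 1)
          = C (j + 1) * (q * hjDual C (j + 1) - Q (j + 1)) - (q * hjDual C j - Q j) := by
        rw [hc]; ring
      rw [this]
      exact dvd_sub (Dvd.dvd.mul_left h5 _) h4

/-- A positive solution `p < d` of `q p ≡ a (mod d)` is the least positive one. -/
theorem hjDual_eq (d q a p b : ℤ) (hcop : Int.gcd d q = 1) (hp0 : 0 < p) (hpd : p < d)
    (hp : d ∣ q * p - a) (hb0 : 0 < b) (hb : d ∣ q * b - a)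
    (hmin : ∀ t : ℤ, 0 < t → d ∣ q * t - a → b ≤ t) : b = p := by
  have hle := hmin p hp0 hp
  have h1 : d ∣ q * (p - b) := by
    have := dvd_sub hp hb
    rwa [show q * p - a - (q * b - a) = q * (p - b) by ring] at this
  have h2 : d ∣ p - b := (Int.isCoprime_iff_gcd_eq_one.mpr hcop).dvd_of_dvd_mul_left h1
  have h3 := Int.eq_zero_of_dvd_of_nonneg_of_lt (by linarith) (by linarith : p - b < d) h2
  linarith

/-- If all greedy digits of `k < Q 0` before position `m + 1` vanish, then `k < Q m`. -/
theorem lt_of_greedy (Q : ℕ → ℤ) (k : ℤ) (hk : 0 ≤ k) (hkd : k < Q 0) (m : ℕ)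
    (hpos : ∀ j, j ≤ m → 0 < Q j)
    (hz : ∀ j, 1 ≤ j → j ≤ m → hjGreedy Q k j = 0) : hjRem Q k m = k ∧ k < Q m := by
  induction m with
  | zero => exact ⟨Int.emod_eq_of_lt hk hkd, hkd⟩
  | succ m ih =>
    obtain ⟨h1, -⟩ := ih (fun j hj => hpos j (by omega)) (fun j h hj => hz j h (by omega))
    have h2 := hz (m + 1) (by omega) le_rfl
    have hp := hpos (m + 1) le_rfl
    simp only [hjGreedy, h1] at h2
    have h3 := Int.emod_add_mul_ediv k (Q (m + 1))
    rw [h2, mul_zero, add_zero] at h3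
    refine ⟨by simp only [hjRem, h1, h3], ?_⟩
    rw [← h3]
    exact Int.emod_lt_of_pos k hp

/-- The lattice-point estimate for three consecutive steps `(x₀, p₀), (x₁, p₁), (x₂, p₂)` of the
Hirzebruch–Jung algorithm, `x` standing for `q_j`. -/
theorem newton_core (d q c t x₀ x₁ x₂ p₀ p₁ p₂ r s : ℤ) (hd : 0 < d)
    (hx : x₀ = c * x₁ - x₂) (hp : p₂ = c * p₁ - p₀) (hc : 2 ≤ c)
    (hx2 : 0 ≤ x₂) (hx12 : x₂ < x₁) (hp0 : 0 ≤ p₀) (hp01 : p₀ < p₁)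
    (hdet : x₁ * p₂ - x₂ * p₁ = d)
    (h0 : d ∣ q * p₀ - x₀) (h1 : d ∣ q * p₁ - x₁) (h2 : d ∣ q * p₂ - x₂)
    (ht : t * x₁ < x₀) (hr : 0 ≤ r) (hs : 0 ≤ s) (hrs : d ∣ r + q * s - t * x₁) :
    t * x₁ * p₁ ≤ p₁ * r + x₁ * s := by
  have key : ∀ p x : ℤ, d ∣ q * p - x → d ∣ p * r + x * s - t * x₁ * p := by
    intro p x h
    have := dvd_sub (Dvd.dvd.mul_left hrs p) (Dvd.dvd.mul_left h s)
    rwa [show p * (r + q * s - t * x₁) - s * (q * p - x) = p * r + x * s - t * x₁ * p by ring]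
      at this
  obtain ⟨a, ha⟩ := key _ _ h1
  -- `t q_i p_{i+1} = t d + t q_{i+1} p_i`, so this quotient differs by `t` from the natural one
  obtain ⟨b', hb⟩ := key _ _ h2
  obtain ⟨e, he⟩ := key _ _ h0
  obtain ⟨b, rfl⟩ : ∃ b, b' = b - t := ⟨b' + t, by ring⟩
  have hdne : d ≠ 0 := hd.ne'
  have htc : t ≤ c - 1 := by
    by_contra hcon
    push Not at hcon
    nlinarith
  have hsum : e + b = t + c * a := by
    apply mul_left_cancel₀ hdne
    subst hx hp
    linear_combination c * ha - he - hb
  have hreq : r = x₁ * b - x₂ * a := by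
    apply mul_left_cancel₀ hdne
    linear_combination x₁ * hb - x₂ * ha - (r - t * x₁) * hdet
  have hseq : s = p₁ * e - p₀ * a := by
    apply mul_left_cancel₀ hdne
    subst hx hp
    linear_combination p₁ * he - p₀ * ha - s * hdet
  by_contra hcon
  have ha1 : a ≤ -1 := by
    by_contra h
    push Not at h
    have : 0 ≤ d * a := mul_nonneg hd.le (by linarith)
    linarith
  have hb1 : a + 1 ≤ b := by
    by_contra h
    have h' : b ≤ a := by omega
    nlinarith
  have he1 : a + 1 ≤ e := by
    by_contra h
    have h' : e ≤ a := by omega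
    nlinarith
  nlinarith

/-- **Hirzebruch–Jung data** of `d/q` for coprime `d > q ≥ 1`:
`q_0 = d > q_1 = q > ⋯ > q_n = 1 > q_{n+1} = 0`, `c_i ≥ 2` with
`q_{i-1} = c_i q_i − q_{i+1}`; `q̄_i` is the smallest positive integer with
`q·q̄_i ≡ q_i (mod d)`.

**Statement:** fix `1 ≤ i ≤ n` and `t ≥ 1` with `t·q_i < d` such that the
greedy `X`-decomposition of `t·q_i` is concentrated at position `i` (digit `t`
there, `0` elsewhere).  Then every `(r,s) ∈ ℤ≥0²` with
`r + q·s ≡ t·q_i (mod d)` satisfies `q̄_i·r + q_i·s ≥ t·q_i·q̄_i`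
(no lattice points of `𝕃(t·q_i)` lie strictly below the compact face of the
Minkowski sum of `t` copies of the Newton polygon of the curvette
`x^{q_i} − y^{q̄_i} ∈ 𝒪_X(q_i)`). -/
theorem curvette_newton_polygon
    (n : ℕ) (d q : ℤ) (Q C Qbar : ℕ → ℤ)
    (hn : 1 ≤ n) (hq1 : 1 ≤ q) (hqd : q < d) (hcop : Int.gcd d q = 1)
    (hQ0 : Q 0 = d) (hQ1 : Q 1 = q) (hQn : Q n = 1) (hQtop : Q (n + 1) = 0)
    (hQdec : ∀ i, i ≤ n → Q (i + 1) < Q i)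
    (hC : ∀ i, 1 ≤ i → i ≤ n → Q (i - 1) = C i * Q i - Q (i + 1))
    (hC2 : ∀ i, 1 ≤ i → i ≤ n → 2 ≤ C i)
    (hQbar0 : Qbar 0 = 0) (hQbarTop : Qbar (n + 1) = d)
    (hQbarPos : ∀ i, 1 ≤ i → i ≤ n → 0 < Qbar i)
    (hQbarCong : ∀ i, 1 ≤ i → i ≤ n → d ∣ q * Qbar i - Q i)
    (hQbarMin : ∀ i, 1 ≤ i → i ≤ n → ∀ t : ℤ, 0 < t → d ∣ q * t - Q i → Qbar i ≤ t)
    (i : ℕ) (hi1 : 1 ≤ i) (hin : i ≤ n)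
    (t : ℤ) (ht : 1 ≤ t) (htd : t * Q i < d)
    (hgreedy_i : hjGreedy Q (t * Q i) i = t)
    (hgreedy_other : ∀ j, 1 ≤ j → j ≤ n → j ≠ i → hjGreedy Q (t * Q i) j = 0) :
    ∀ r s : ℤ, 0 ≤ r → 0 ≤ s → d ∣ r + q * s - t * Q i →
      t * Q i * Qbar i ≤ Qbar i * r + Q i * s := by
  intro r s hr hs hrs
  have hnonneg : ∀ j, j ≤ n + 1 → 0 ≤ Q j := by
    intro j hj
    induction hj using Nat.decreasingInduction with
    | self => exact hQtop.ge
    | of_succ k hk ih => exact ih.trans (hQdec k (by omega)).le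
  have hpos : ∀ j, j ≤ n → 0 < Q j := fun j hj =>
    (hnonneg (j + 1) (by omega)).trans_lt (hQdec j hj)
  have props := hjDual_props n d q Q C hq1 hqd hQ0 hQ1 hQdec hpos hC hC2
  obtain ⟨m, rfl⟩ : ∃ m, i = m + 1 := ⟨i - 1, by omega⟩
  obtain ⟨a0, a1, -, -, a4, a5⟩ := props m (by omega)
  obtain ⟨-, -, b2, b3, -, b5⟩ := props (m + 1) hin
  have hQb : Qbar (m + 1) = hjDual C (m + 1) :=
    hjDual_eq d q (Q (m + 1)) _ _ hcop (by linarith) b2 a5 (hQbarPos _ hi1 hin)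
      (hQbarCong _ hi1 hin) (hQbarMin _ hi1 hin)
  have hlt := (lt_of_greedy Q (t * Q (m + 1))
    (mul_nonneg (by linarith) (hpos _ hin).le) (by rw [hQ0]; exact htd) m
    (fun j hj => hpos j (by omega))
    (fun j h1 hj => hgreedy_other j h1 (by omega) (by omega))).2
  rw [hQb]
  exact newton_core d q (C (m + 1)) t (Q m) (Q (m + 1)) (Q (m + 2)) (hjDual C m)
    (hjDual C (m + 1)) (hjDual C (m + 2)) r s (by linarith) (hC (m + 1) hi1 hin) rfl
    (hC2 _ hi1 hin) (hnonneg _ (by omega)) (hQdec _ hin) a0 a1 b3 a4 a5 b5 hlt hr hs hrs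
end

section
/- For every 1 ≤ j ≤ n, the greedy X-decomposition of q_{j−1} − 1 has digit c_j − 1 at position j, digit c_i − 2 at every position i with j < i ≤ n, and digit 0 at every position i < j; in particular q_{j−1} − 1 = (c_j − 1)·q_j + Σ_{i=j+1}^n (c_i − 2)·q_i. -/
theorem ediv_emod_of_eq {a b c r : ℤ} (h : a = c * b + r) (h0 : 0 ≤ r) (h1 : r < b) :
    a / b = c ∧ a % b = r :=
  (Int.ediv_emod_unique (by omega)).2 ⟨by rw [h]; ring, h0, h1⟩

theorem hj_lt_of_lt {n : ℕ} {Q : ℕ → ℤ} (hQdec : ∀ i, i ≤ n → Q (i + 1) < Q i)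
    {a b : ℕ} (hab : a < b) (hb : b ≤ n + 1) : Q b < Q a := by
  induction b, hab using Nat.le_induction with
  | base => exact hQdec a (by omega)
  | succ b _ ih => exact (hQdec b (by omega)).trans (ih (by omega))

theorem hj_nonneg {n : ℕ} {Q : ℕ → ℤ} (hQtop : Q (n + 1) = 0)
    (hQdec : ∀ i, i ≤ n → Q (i + 1) < Q i) {a : ℕ} (ha : a ≤ n + 1) : 0 ≤ Q a := by
  rcases ha.eq_or_lt with rfl | h
  · exact hQtop.ge
  · exact hQtop ▸ (hj_lt_of_lt hQdec h le_rfl).le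

/-- A value smaller than every coin up to index `m` passes through the greedy algorithm
unchanged. -/
theorem hjRem_before {Q : ℕ → ℤ} {k : ℤ} (hk : 0 ≤ k) {m : ℕ}
    (h : ∀ i, i ≤ m → k < Q i) : hjRem Q k m = k := by
  induction m with
  | zero => exact Int.emod_eq_of_lt hk (h 0 le_rfl)
  | succ m ih =>
    rw [hjRem, ih fun i hi => h i (by omega)]
    exact Int.emod_eq_of_lt hk (h _ le_rfl)

/-- From index `m` on, if the remainder is `q_m - q_{m+1} - 1` at `m`, it keeps this shape, and
each further digit is `c_i - 2`. -/
theorem hjRem_after {n : ℕ} {Q C : ℕ → ℤ} {k : ℤ} (hQtop : Q (n + 1) = 0)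
    (hQdec : ∀ i, i ≤ n → Q (i + 1) < Q i)
    (hC : ∀ i, 1 ≤ i → i ≤ n → Q (i - 1) = C i * Q i - Q (i + 1))
    {m : ℕ} (hm : hjRem Q k m = Q m - Q (m + 1) - 1) {i : ℕ} (hmi : m ≤ i) (hi : i ≤ n) :
    hjRem Q k i = Q i - Q (i + 1) - 1 ∧ (m < i → hjGreedy Q k i = C i - 2) := by
  induction i, hmi using Nat.le_induction with
  | base => exact ⟨hm, fun h => absurd h (lt_irrefl _)⟩
  | succ i _ ih =>
    have hrec := hC (i + 1) (by omega) hi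
    rw [Nat.add_sub_cancel] at hrec
    have hlt := hQdec (i + 1) hi
    have hnn := hj_nonneg hQtop hQdec (a := i + 1 + 1) (by omega)
    obtain ⟨hdiv, hmod⟩ := ediv_emod_of_eq (a := hjRem Q k i) (b := Q (i + 1))
      (c := C (i + 1) - 2) (r := Q (i + 1) - Q (i + 1 + 1) - 1)
      (by rw [(ih (by omega)).1, hrec]; ring) (by omega) (by omega)
    exact ⟨hmod, fun _ => hdiv⟩

/-- **Hirzebruch–Jung data** of `d/q` for coprime `d > q ≥ 1`:
`q_0 = d > q_1 = q > ⋯ > q_n = 1 > q_{n+1} = 0`, `c_i ≥ 2` with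
`q_{i-1} = c_i q_i − q_{i+1}`.

**Statement:** for every `1 ≤ j ≤ n`, the greedy `X`-decomposition of
`q_{j−1} − 1` has digit `c_j − 1` at position `j`, digit `c_i − 2` at every
position `j < i ≤ n`, and digit `0` at every position `i < j`; in particular
`q_{j−1} − 1 = (c_j − 1)·q_j + Σ_{i=j+1}^n (c_i − 2)·q_i`. -/
theorem greedy_decomposition_of_q_pred
    (n : ℕ) (d q : ℤ) (Q C : ℕ → ℤ)
    (hn : 1 ≤ n) (hq1 : 1 ≤ q) (hqd : q < d) (hcop : Int.gcd d q = 1)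
    (hQ0 : Q 0 = d) (hQ1 : Q 1 = q) (hQn : Q n = 1) (hQtop : Q (n + 1) = 0)
    (hQdec : ∀ i, i ≤ n → Q (i + 1) < Q i)
    (hC : ∀ i, 1 ≤ i → i ≤ n → Q (i - 1) = C i * Q i - Q (i + 1))
    (hC2 : ∀ i, 1 ≤ i → i ≤ n → 2 ≤ C i) :
    ∀ j, 1 ≤ j → j ≤ n →
      (hjGreedy Q (Q (j - 1) - 1) j = C j - 1) ∧
      (∀ i, j < i → i ≤ n → hjGreedy Q (Q (j - 1) - 1) i = C i - 2) ∧
      (∀ i, 1 ≤ i → i < j → hjGreedy Q (Q (j - 1) - 1) i = 0) ∧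
      (Q (j - 1) - 1
        = (C j - 1) * Q j + ∑ i ∈ Finset.Icc (j + 1) n, (C i - 2) * Q i) := by
  intro j hj1 hjn
  obtain ⟨p, rfl⟩ : ∃ p, j = p + 1 := ⟨j - 1, by omega⟩
  have hrec := hC (p + 1) hj1 hjn
  rw [Nat.add_sub_cancel] at hrec ⊢
  have hlt := hQdec (p + 1) hjn
  have hlt' := hQdec p (by omega)
  have hnn := hj_nonneg hQtop hQdec (a := p + 1 + 1) (by omega)
  have hk : 0 ≤ Q p - 1 := by omega
  have hsmall : ∀ i, i ≤ p → Q p - 1 < Q i := by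
    intro i hi
    rcases hi.eq_or_lt with rfl | h
    · omega
    · have := hj_lt_of_lt hQdec h (by omega)
      omega
  obtain ⟨hdiv, hmod⟩ := ediv_emod_of_eq (a := hjRem Q (Q p - 1) p) (b := Q (p + 1))
    (c := C (p + 1) - 1) (r := Q (p + 1) - Q (p + 1 + 1) - 1)
    (by rw [hjRem_before hk hsmall, hrec]; ring) (by omega) (by omega)
  refine ⟨hdiv, fun i hi hin =>
    (hjRem_after (m := p + 1) hQtop hQdec hC hmod hi.le hin).2 hi, ?_, ?_⟩
  · intro i hi1 hij
    obtain ⟨s, rfl⟩ : ∃ s, i = s + 1 := ⟨i - 1, by omega⟩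
    rw [hjGreedy, hjRem_before hk fun i hi => hsmall i (by omega)]
    exact Int.ediv_eq_zero_of_lt hk (hsmall _ (by omega))
  -- The partial sums up to `m` fall short by exactly the remainder `q_m - q_{m+1} - 1`.
  · have hpartial : ∀ m, p + 1 ≤ m → m ≤ n → Q p - 1 = (C (p + 1) - 1) * Q (p + 1)
        + ∑ i ∈ Finset.Icc (p + 1 + 1) m, (C i - 2) * Q i + (Q m - Q (m + 1) - 1) := by
      intro m hm
      induction m, hm using Nat.le_induction with
      | base =>
        intro _
        rw [Finset.Icc_eq_empty (by omega), Finset.sum_empty, hrec]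
        ring
      | succ m hm ih =>
        intro hmn
        have hstep := hC (m + 1) (by omega) hmn
        rw [Nat.add_sub_cancel] at hstep
        rw [Finset.sum_Icc_succ_top (by omega)]
        linear_combination ih (by omega) + hstep
    have := hpartial n hjn le_rfl
    rw [hQn, hQtop] at this
    linarith
end
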